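/- arXiv:2206.11735 — 3 statements merged into one kernel-verified Lean document; each statement's English description precedes it below -/
import Mathlib

section
/- For all t, s ∈ ℝ, the blocks Φ₁₁(t,s) and Φ₂₂(t,s) are invertible. Moreover, Φ₁₁(t,s) = Φ₂₂(s,t)ᵀ = (Φ₁₁(s,t) − Φ₁₂(s,t)Φ₂₂(s,t)⁻¹Φ₂₁(s,t))⁻¹ = (Φ₂₂(t,s)ᵀ − Φ₁₂(t,s)ᵀΦ₁₁(t,s)⁻ᵀΦ₂₁(t,s)ᵀ)⁻¹. -/
/-!
Along two solutions `(x, y)` and `(x', y')` of the Hamiltonian system one computes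
`(y' ⬝ x)˙ = -(x' ⬝ Q x) - (Bᵀ y' ⬝ Bᵀ y)` (`hasDerivAt_pairing`). Everything follows from this.

* The right-hand side is symmetric in the two solutions, so the symplectic form `y' ⬝ x - y ⬝ x'`
  is constant (`symplectic_const`). Applied to the columns of `Φ(·, t)` and `Φ(·, s)`, this
  expresses the blocks of `Φ(s, t)` as transposed blocks of `Φ(t, s)`; applied to the columns of
  `Φ(·, s)` alone, it gives the block identities for a symplectic matrix.
* If `Φ₁₁(t, s) v = 0`, the solution starting from `(v, 0)` at time `s` has `x ⬝ y = 0` at both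
  `s` and `t`. As `x ⬝ y` is antitone, it is constant in between, so `Q x = 0` and `Bᵀ y = 0` there.
  Hence `y' ⬝ x` is constant between `s` and `t` for *every* solution `(x', y')`. It vanishes
  at `t`, and choosing `(x', y')` with `y'(s) = v` gives `v ⬝ v = 0`.

The last two formulas are the Schur complement inverse of the symplectic matrix `Φ(t, s)`. Neither
existence nor uniqueness theorems for differential equations are needed.
-/

open Matrix

/-- `IsSTM F Φ`: `Φ` is the state transition matrix of `F`, i.e. for each fixed `s`,
`t ↦ Φ t s` solves `X' = F t * X`, `X s = 1` (derivatives taken entrywise). -/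
def IsSTM {ι : Type*} [Fintype ι] [DecidableEq ι] (F : ℝ → Matrix ι ι ℝ)
    (Φ : ℝ → ℝ → Matrix ι ι ℝ) : Prop :=
  (∀ s : ℝ, Φ s s = 1) ∧
  ∀ (s t : ℝ) (i j : ι), HasDerivAt (fun t' : ℝ => Φ t' s i j) ((F t * Φ t s) i j) t

section Hamiltonian

variable {n p : ℕ} {A Q : ℝ → Matrix (Fin n) (Fin n) ℝ} {B : ℝ → Matrix (Fin n) (Fin p) ℝ}

/-- `(x, y)` is a solution on `ℝ` of the linear Hamiltonian system
`x˙ = A x - B Bᵀ y`, `y˙ = -Q x - Aᵀ y`. -/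
def IsHamSol (A Q : ℝ → Matrix (Fin n) (Fin n) ℝ) (B : ℝ → Matrix (Fin n) (Fin p) ℝ)
    (x y : ℝ → Fin n → ℝ) : Prop :=
  ∀ u, HasDerivAt x (A u *ᵥ x u - B u *ᵥ ((B u)ᵀ *ᵥ y u)) u ∧
    HasDerivAt y (-(Q u *ᵥ x u) - (A u)ᵀ *ᵥ y u) u

lemma hasDerivAt_dotProduct {f g : ℝ → Fin n → ℝ} {f' g' : Fin n → ℝ} {u : ℝ}
    (hf : HasDerivAt f f' u) (hg : HasDerivAt g g' u) :
    HasDerivAt (fun r => f r ⬝ᵥ g r) (f' ⬝ᵥ g u + f u ⬝ᵥ g') u := by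
  rw [hasDerivAt_pi] at hf hg
  have := HasDerivAt.fun_sum (u := Finset.univ) fun i _ => (hf i).mul (hg i)
  simpa [dotProduct, Finset.sum_add_distrib] using this

lemma mulVec_dotProduct_comm {m k : ℕ} (M : Matrix (Fin m) (Fin k) ℝ) (v : Fin k → ℝ)
    (w : Fin m → ℝ) : w ⬝ᵥ (M *ᵥ v) = (Mᵀ *ᵥ w) ⬝ᵥ v := by
  rw [dotProduct_mulVec, mulVec_transpose]

/-- The terms in `A` cancel, and `Q` can act on either factor by symmetry. -/
lemma hasDerivAt_pairing (hQ : ∀ t, (Q t)ᵀ = Q t) {x y x' y' : ℝ → Fin n → ℝ}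
    (h : IsHamSol A Q B x y) (h' : IsHamSol A Q B x' y') (u : ℝ) :
    HasDerivAt (fun r => y' r ⬝ᵥ x r)
      (-(x' u ⬝ᵥ (Q u *ᵥ x u)) - ((B u)ᵀ *ᵥ y' u) ⬝ᵥ ((B u)ᵀ *ᵥ y u)) u := by
  convert hasDerivAt_dotProduct (h' u).2 (h u).1 using 1
  rw [sub_dotProduct, neg_dotProduct, dotProduct_sub, mulVec_dotProduct_comm (A u),
    mulVec_dotProduct_comm (B u), mulVec_dotProduct_comm (Q u), hQ]
  ring

lemma symplectic_const (hQ : ∀ t, (Q t)ᵀ = Q t) {x y x' y' : ℝ → Fin n → ℝ}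
    (h : IsHamSol A Q B x y) (h' : IsHamSol A Q B x' y') (a b : ℝ) :
    y' a ⬝ᵥ x a - y a ⬝ᵥ x' a = y' b ⬝ᵥ x b - y b ⬝ᵥ x' b := by
  have hd : ∀ u, HasDerivAt (fun r => y' r ⬝ᵥ x r - y r ⬝ᵥ x' r) 0 u := by
    intro u
    refine ((hasDerivAt_pairing hQ h h' u).sub (hasDerivAt_pairing hQ h' h u)).congr_deriv ?_
    rw [mulVec_dotProduct_comm (Q u), hQ, dotProduct_comm (Q u *ᵥ x' u),
      dotProduct_comm ((B u)ᵀ *ᵥ y' u)]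
    ring
  exact is_const_of_deriv_eq_zero (fun u => (hd u).differentiableAt) (fun u => (hd u).deriv) a b

/-- If `x ⬝ y` vanishes at both ends of an interval, the dissipation terms vanish inside, and so
the pairing of `x` with the second component of any other solution has equal end values. -/
lemma pairing_eq_of_lt (hQ : ∀ t, (Q t).PosSemidef) {x y x' y' : ℝ → Fin n → ℝ}
    (h : IsHamSol A Q B x y) (h' : IsHamSol A Q B x' y') {a b : ℝ} (hab : a < b)
    (ha : y a ⬝ᵥ x a = 0) (hb : y b ⬝ᵥ x b = 0) : y' a ⬝ᵥ x a = y' b ⬝ᵥ x b := by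
  have hQs : ∀ t, (Q t)ᵀ = Q t := fun t => by simpa using (hQ t).isHermitian.eq
  have hQn : ∀ u, 0 ≤ x u ⬝ᵥ (Q u *ᵥ x u) := fun u => by
    simpa using (hQ u).dotProduct_mulVec_nonneg (x u)
  have hBn : ∀ u, 0 ≤ ((B u)ᵀ *ᵥ y u) ⬝ᵥ ((B u)ᵀ *ᵥ y u) := fun u =>
    Finset.sum_nonneg fun i _ => mul_self_nonneg _
  have hd := hasDerivAt_pairing hQs h h
  have hanti : Antitone fun r => y r ⬝ᵥ x r := by
    refine antitone_of_deriv_nonpos (fun u => (hd u).differentiableAt) fun u => ?_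
    rw [(hd u).deriv]
    linarith [hQn u, hBn u]
  have hzero : ∀ u ∈ Set.Ioo a b, y u ⬝ᵥ x u = 0 := fun u hu =>
    le_antisymm (ha ▸ hanti hu.1.le) (hb ▸ hanti hu.2.le)
  have hd' : ∀ u ∈ Set.Ioo a b, HasDerivAt (fun r => y' r ⬝ᵥ x r) 0 u := by
    intro u hu
    have h0 : HasDerivAt (fun r => y r ⬝ᵥ x r) 0 u :=
      (hasDerivAt_const u (0 : ℝ)).congr_of_eventuallyEq <|
        Filter.eventually_of_mem (Ioo_mem_nhds hu.1 hu.2) hzero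
    have e := (hd u).unique h0
    have hQ0 : Q u *ᵥ x u = 0 := by
      refine ((hQ u).dotProduct_mulVec_zero_iff (x u)).1 ?_
      simpa using (by linarith [hQn u, hBn u] : x u ⬝ᵥ (Q u *ᵥ x u) = 0)
    have hB0 : (B u)ᵀ *ᵥ y u = 0 :=
      dotProduct_self_eq_zero.1 (by linarith [hQn u, hBn u])
    simpa [hQ0, hB0] using hasDerivAt_pairing hQs h h' u
  obtain ⟨c, -, hc⟩ := exists_hasDerivAt_eq_slope (fun r => y' r ⬝ᵥ x r) (fun _ => 0) hab
    (fun u _ => (hasDerivAt_pairing hQs h h' u).continuousAt.continuousWithinAt) hd'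
  have := (div_eq_zero_iff.1 hc.symm).resolve_right (sub_pos.2 hab).ne'
  linarith

lemma IsSTM.isHamSol {Φ : ℝ → ℝ → Matrix (Fin n ⊕ Fin n) (Fin n ⊕ Fin n) ℝ}
    (hΦ : IsSTM (fun t => fromBlocks (A t) (-(B t * (B t)ᵀ)) (-(Q t)) (-(A t)ᵀ)) Φ)
    (s : ℝ) (w : Fin n ⊕ Fin n → ℝ) :
    IsHamSol A Q B (fun u i => (Φ u s *ᵥ w) (Sum.inl i)) (fun u i => (Φ u s *ᵥ w) (Sum.inr i)) := by
  intro u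
  have key : ∀ k, HasDerivAt (fun r => (Φ r s *ᵥ w) k)
      ((fromBlocks (A u) (-(B u * (B u)ᵀ)) (-(Q u)) (-(A u)ᵀ) *ᵥ (Φ u s *ᵥ w)) k) u := by
    intro k
    rw [mulVec_mulVec]
    exact HasDerivAt.fun_sum (u := Finset.univ) fun j _ => (hΦ.2 s u k j).mul_const (w j)
  refine ⟨hasDerivAt_pi.2 fun i => ?_, hasDerivAt_pi.2 fun i => ?_⟩
  · refine (key (Sum.inl i)).congr_deriv ?_
    rw [fromBlocks_mulVec]
    simp [neg_mulVec, mulVec_mulVec, sub_eq_add_neg, Function.comp_def]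
  · refine (key (Sum.inr i)).congr_deriv ?_
    rw [fromBlocks_mulVec]
    simp [neg_mulVec, sub_eq_add_neg, Function.comp_def]

lemma isUnit_toBlocks₁₁ (hQ : ∀ t, (Q t).PosSemidef)
    {Φ : ℝ → ℝ → Matrix (Fin n ⊕ Fin n) (Fin n ⊕ Fin n) ℝ}
    (hΦ : IsSTM (fun t => fromBlocks (A t) (-(B t * (B t)ᵀ)) (-(Q t)) (-(A t)ᵀ)) Φ)
    (t s : ℝ) : IsUnit (Φ t s).toBlocks₁₁ := by
  rw [← mulVec_injective_iff_isUnit]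
  refine (injective_iff_map_eq_zero (Φ t s).toBlocks₁₁.mulVecLin).2 fun v hv => ?_
  have h := hΦ.isHamSol s (Sum.elim v 0)
  have h' := hΦ.isHamSol s (Sum.elim 0 v)
  have hx : (fun i => (Φ t s *ᵥ Sum.elim v 0) (Sum.inl i)) = 0 := by
    refine Eq.trans ?_ hv
    ext i
    simp [mulVec, dotProduct, toBlocks₁₁]
  have hy : (fun i => (Φ s s *ᵥ Sum.elim v 0) (Sum.inr i)) = 0 := by
    ext i
    simp [hΦ.1]
  rcases lt_trichotomy s t with hst | rfl | hst
  · have := pairing_eq_of_lt hQ h h' hst (by simp only [hy, zero_dotProduct])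
      (by simp only [hx, dotProduct_zero])
    simp only [hx, dotProduct_zero] at this
    simpa [hΦ.1] using this
  · simpa [hΦ.1, funext_iff] using hx
  · have := pairing_eq_of_lt hQ h h' hst (by simp only [hx, dotProduct_zero])
      (by simp only [hy, zero_dotProduct])
    simp only [hx, dotProduct_zero] at this
    simpa [hΦ.1, eq_comm] using this

/-- The symplectic form of column `k` of `Φ(·, s)` and column `l` of `Φ(·, r)` takes the same
value at times `a` and `b`. -/
lemma symplectic_columns (hQ : ∀ t, (Q t)ᵀ = Q t)
    {Φ : ℝ → ℝ → Matrix (Fin n ⊕ Fin n) (Fin n ⊕ Fin n) ℝ}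
    (hΦ : IsSTM (fun t => fromBlocks (A t) (-(B t * (B t)ᵀ)) (-(Q t)) (-(A t)ᵀ)) Φ)
    (s r a b : ℝ) (k l : Fin n ⊕ Fin n) :
    (∑ i, Φ a r (Sum.inr i) l * Φ a s (Sum.inl i) k)
        - ∑ i, Φ a s (Sum.inr i) k * Φ a r (Sum.inl i) l =
      (∑ i, Φ b r (Sum.inr i) l * Φ b s (Sum.inl i) k)
        - ∑ i, Φ b s (Sum.inr i) k * Φ b r (Sum.inl i) l := by
  simpa [dotProduct] using symplectic_const hQ (hΦ.isHamSol s (Pi.single k 1))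
    (hΦ.isHamSol r (Pi.single l 1)) a b

end Hamiltonian

theorem stmt_1 {n p : ℕ} (hn : 1 ≤ n) (hp : 1 ≤ p)
    (A Q : ℝ → Matrix (Fin n) (Fin n) ℝ) (B : ℝ → Matrix (Fin n) (Fin p) ℝ)
    (hA : Continuous A) (hB : Continuous B) (hQ : Continuous Q)
    (hQpsd : ∀ t, (Q t).PosSemidef)
    (Φ : ℝ → ℝ → Matrix (Fin n ⊕ Fin n) (Fin n ⊕ Fin n) ℝ)
    (hΦ : IsSTM (fun t => fromBlocks (A t) (-(B t * (B t)ᵀ)) (-(Q t)) (-(A t)ᵀ)) Φ)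
    (t s : ℝ) :
    IsUnit ((Φ t s).toBlocks₁₁) ∧ IsUnit ((Φ t s).toBlocks₂₂) ∧
    (Φ t s).toBlocks₁₁ = ((Φ s t).toBlocks₂₂)ᵀ ∧
    (Φ t s).toBlocks₁₁ =
      ((Φ s t).toBlocks₁₁ -
        (Φ s t).toBlocks₁₂ * ((Φ s t).toBlocks₂₂)⁻¹ * (Φ s t).toBlocks₂₁)⁻¹ ∧
    (Φ t s).toBlocks₁₁ =
      (((Φ t s).toBlocks₂₂)ᵀ -
        ((Φ t s).toBlocks₁₂)ᵀ * (((Φ t s).toBlocks₁₁)⁻¹)ᵀ * ((Φ t s).toBlocks₂₁)ᵀ)⁻¹ := by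
  have hQs : ∀ t, (Q t)ᵀ = Q t := fun t => by simpa using (hQpsd t).isHermitian.eq
  have hcol := symplectic_columns hQs hΦ
  have h1 : ∀ t s, (Φ t s).toBlocks₁₁ = ((Φ s t).toBlocks₂₂)ᵀ := by
    intro t s
    ext i j
    simpa [hΦ.1, one_apply, toBlocks₁₁, toBlocks₂₂] using
      hcol s t t s (Sum.inl j) (Sum.inr i)
  have h2 : (Φ s t).toBlocks₁₂ = -((Φ t s).toBlocks₁₂)ᵀ := by
    ext i j
    simpa [hΦ.1, one_apply, toBlocks₁₂, eq_comm, neg_eq_iff_eq_neg] using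
      hcol s t s t (Sum.inr i) (Sum.inr j)
  have h3 : (Φ s t).toBlocks₂₁ = -((Φ t s).toBlocks₂₁)ᵀ := by
    ext i j
    simpa [hΦ.1, one_apply, toBlocks₂₁, eq_comm] using
      hcol s t s t (Sum.inl i) (Sum.inl j)
  have h4 : ((Φ t s).toBlocks₂₁)ᵀ * (Φ t s).toBlocks₁₁
      = ((Φ t s).toBlocks₁₁)ᵀ * (Φ t s).toBlocks₂₁ := by
    ext i j
    have := hcol s s t s (Sum.inl j) (Sum.inl i)
    simp only [hΦ.1, one_apply] at this
    simp [sub_eq_zero] at this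
    simpa [mul_apply, toBlocks₁₁, toBlocks₂₁, mul_comm] using this
  have h5 : ((Φ t s).toBlocks₂₂)ᵀ * (Φ t s).toBlocks₁₁
      - ((Φ t s).toBlocks₁₂)ᵀ * (Φ t s).toBlocks₂₁ = 1 := by
    ext i j
    have := hcol s s t s (Sum.inl j) (Sum.inr i)
    simp only [hΦ.1, one_apply] at this
    simp at this
    simpa [mul_apply, one_apply, toBlocks₁₁, toBlocks₂₁, toBlocks₁₂, toBlocks₂₂, mul_comm,
      eq_comm] using this
  have hu : ∀ t s, IsUnit (Φ t s).toBlocks₁₁ := isUnit_toBlocks₁₁ hQpsd hΦ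
  have hdet : IsUnit (((Φ t s).toBlocks₁₁)ᵀ).det := by
    rw [det_transpose]
    exact (isUnit_iff_isUnit_det _).1 (hu t s)
  have h22 : ∀ t s, (Φ t s).toBlocks₂₂ = ((Φ s t).toBlocks₁₁)ᵀ := fun t s => by
    rw [h1 s t, transpose_transpose]
  -- `a = Φ₁₁(t, s)` inverts the Schur complement, since `cᵀ a = aᵀ c` and `dᵀ a - bᵀ c = 1`.
  have hlast : (Φ t s).toBlocks₁₁ =
      (((Φ t s).toBlocks₂₂)ᵀ -
        ((Φ t s).toBlocks₁₂)ᵀ * (((Φ t s).toBlocks₁₁)⁻¹)ᵀ * ((Φ t s).toBlocks₂₁)ᵀ)⁻¹ := by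
    refine (inv_eq_right_inv ?_).symm
    rw [sub_mul, Matrix.mul_assoc, h4, transpose_nonsing_inv, Matrix.mul_assoc,
      nonsing_inv_mul_cancel_left _ _ hdet, h5]
  refine ⟨hu t s, ?_, h1 t s, ?_, hlast⟩
  · rw [h22]
    exact (isUnit_transpose _).2 (hu s t)
  · rw [h2, h3, h22 s t, h1 s t]
    simpa [transpose_nonsing_inv] using hlast
end

section
/- For all t, s ∈ ℝ, −Φ₁₁(t,s)⁻¹Φ₁₂(t,s) = ∫ₛᵗ Φ₁₁(τ,s)⁻¹ B(τ)B(τ)ᵀ Φ₁₁(τ,s)⁻ᵀ dτ (the blocks Φ₁₁(τ,s) being invertible for all τ, s). -/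
/-!
Write `Φ(·, s)` in blocks as `X = Φ₁₁`, `U = Φ₁₂`, `Y = Φ₂₁`, `V = Φ₂₂` and put `P = B Bᵀ`, so that
each block column solves `x' = A x - P y`, `y' = -Q x - Aᵀ y`.

*Invertibility of `X`.* If `X(τ) v = 0`, put `x = X v` and `y = Y v`. Then
`(x ⬝ y)' = -(y ⬝ P y) - (x ⬝ Q x) ≤ 0`, while `x ⬝ y` vanishes at `s` (where `y = 0`) and at `τ`
(where `x = 0`). Hence `x ⬝ y` is constant between `s` and `τ`, so `P y = 0` there, and `x` solves
`x' = A x`. As `x(τ) = 0`, uniqueness for linear equations gives `v = x(s) = 0`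
(`isUnit_block`, resting on `linear_ode_zero`).

*The integral formula.* For two solutions of the Hamiltonian system the pairing `X₁ᵀ Y₂ - Y₁ᵀ X₂` is
constant (`pairing_const`), which gives `Xᵀ V - Yᵀ U = 1` and `Xᵀ Y = Yᵀ X`. Together with the
derivative of the inverse these yield `(X⁻¹ U)' = X⁻¹ P (Y X⁻¹ U - V) = -X⁻¹ P X⁻ᵀ`
(`inv_mul_identity`), and the fundamental theorem of calculus concludes.
-/

open Matrix

/-- `HasMatDeriv X X' t`: the matrix-valued function `X` has derivative `X'` at `t`, entry by
entry; this avoids fixing a norm on matrices. -/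
def HasMatDeriv {m k : Type*} (X : ℝ → Matrix m k ℝ) (X' : Matrix m k ℝ) (t : ℝ) : Prop :=
  ∀ i j, HasDerivAt (fun t => X t i j) (X' i j) t

lemma HasMatDeriv.mul {m k l : Type*} [Fintype k] {X : ℝ → Matrix m k ℝ} {Y : ℝ → Matrix k l ℝ}
    {X' : Matrix m k ℝ} {Y' : Matrix k l ℝ} {t : ℝ} (hX : HasMatDeriv X X' t)
    (hY : HasMatDeriv Y Y' t) :
    HasMatDeriv (fun t => X t * Y t) (X' * Y t + X t * Y') t := by
  intro i j
  simp only [Matrix.mul_apply, Matrix.add_apply, ← Finset.sum_add_distrib]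
  exact HasDerivAt.fun_sum fun a _ => (hX i a).mul (hY a j)

lemma HasMatDeriv.sub {m k : Type*} {X Y : ℝ → Matrix m k ℝ}
    {X' Y' : Matrix m k ℝ} {t : ℝ} (hX : HasMatDeriv X X' t)
    (hY : HasMatDeriv Y Y' t) : HasMatDeriv (fun t => X t - Y t) (X' - Y') t :=
  fun i j => (hX i j).sub (hY i j)

lemma HasMatDeriv.transpose {m k : Type*} {X : ℝ → Matrix m k ℝ} {X' : Matrix m k ℝ} {t : ℝ}
    (hX : HasMatDeriv X X' t) : HasMatDeriv (fun t => (X t)ᵀ) X'ᵀ t :=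
  fun i j => hX j i

lemma HasMatDeriv.mulVec {m k : Type*} [Fintype m] [Fintype k] {X : ℝ → Matrix m k ℝ}
    {X' : Matrix m k ℝ} {t : ℝ} (hX : HasMatDeriv X X' t) (v : k → ℝ) :
    HasDerivAt (fun t => X t *ᵥ v) (X' *ᵥ v) t := by
  refine hasDerivAt_pi.2 fun i => ?_
  simp only [Matrix.mulVec, dotProduct]
  exact HasDerivAt.fun_sum fun a _ => (hX i a).mul_const (v a)

lemma hasDerivAt_dotProduct_s3 {k : Type*} [Fintype k] {x y : ℝ → k → ℝ} {x' y' : k → ℝ} {t : ℝ}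
    (hx : HasDerivAt x x' t) (hy : HasDerivAt y y' t) :
    HasDerivAt (fun t => x t ⬝ᵥ y t) (x' ⬝ᵥ y t + x t ⬝ᵥ y') t := by
  simp only [dotProduct, ← Finset.sum_add_distrib]
  exact HasDerivAt.fun_sum fun a _ => (hasDerivAt_pi.1 hx a).mul (hasDerivAt_pi.1 hy a)

lemma HasMatDeriv.eq_of_zero {m k : Type*} {X : ℝ → Matrix m k ℝ}
    (hX : ∀ t, HasMatDeriv X 0 t) (a b : ℝ) : X a = X b := by
  ext i j
  exact is_const_of_deriv_eq_zero (f := fun t => X t i j)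
    (fun t => (hX t i j).differentiableAt) (fun t => (hX t i j).deriv) a b

section Norm

attribute [local instance] Matrix.linftyOpNormedRing Matrix.linftyOpNormedAlgebra

lemma HasMatDeriv.inv {m : Type*} [Fintype m] [DecidableEq m] {X : ℝ → Matrix m m ℝ}
    {X' : Matrix m m ℝ} {t : ℝ} (hX : HasMatDeriv X X' t) (hu : IsUnit (X t)) :
    HasMatDeriv (fun t => (X t)⁻¹) (-((X t)⁻¹ * X' * (X t)⁻¹)) t := by
  have h1 : HasDerivAt X X' t := by
    refine hasDerivAt_pi.2 fun i => ?_
    exact hasDerivAt_pi.2 fun j => hX i j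
  obtain ⟨u, hu⟩ := hu
  have h2 := hasFDerivAt_ringInverse (𝕜 := ℝ) u
  rw [hu] at h2
  have h3 := h2.comp_hasDerivAt t h1
  have h4 : (↑u⁻¹ : Matrix m m ℝ) = (X t)⁻¹ := by
    rw [← hu, Matrix.coe_units_inv]
  intro i j
  have h5 := hasDerivAt_pi.1 (hasDerivAt_pi.1 h3 i) j
  simp only [Function.comp_def, ← Matrix.nonsing_inv_eq_ringInverse, h4] at h5
  exact h5

/-- A solution of `x' = A x` on a compact interval vanishing at one endpoint vanishes at both. -/
lemma linear_ode_zero {m : Type*} [Fintype m] [DecidableEq m] {A : ℝ → Matrix m m ℝ}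
    (hA : Continuous A) {x : ℝ → m → ℝ} {a b : ℝ} (hab : a ≤ b)
    (hx : ∀ t ∈ Set.Icc a b, HasDerivAt x (A t *ᵥ x t) t) : x a = 0 ↔ x b = 0 := by
  obtain ⟨K, hK⟩ := isCompact_Icc.exists_bound_of_continuousOn (s := Set.Icc a b)
    (f := A) hA.continuousOn
  have hL : ∀ t ∈ Set.Icc a b, LipschitzOnWith K.toNNReal (fun y => A t *ᵥ y) Set.univ := by
    intro t ht
    refine LipschitzOnWith.of_dist_le_mul fun y _ z _ => ?_
    rw [dist_eq_norm, dist_eq_norm, ← Matrix.mulVec_sub]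
    refine (Matrix.linfty_opNorm_mulVec _ _).trans ?_
    gcongr
    exact (hK t ht).trans (Real.le_coe_toNNReal K)
  have hc : ContinuousOn x (Set.Icc a b) :=
    fun t ht => (hx t ht).continuousAt.continuousWithinAt
  have h0 : ∀ t, HasDerivAt (fun _ : ℝ => (0 : m → ℝ)) (A t *ᵥ 0) t := fun t => by
    rw [Matrix.mulVec_zero]; exact hasDerivAt_const _ _
  constructor
  · intro h
    exact ODE_solution_unique_of_mem_Icc_right (v := fun t y => A t *ᵥ y)
      (g := fun _ => 0) (s := fun _ => Set.univ)
      (fun t ht => hL t (Set.Ico_subset_Icc_self ht)) hc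
      (fun t ht => (hx t (Set.Ico_subset_Icc_self ht)).hasDerivWithinAt) (fun _ _ => trivial)
      continuousOn_const (fun t _ => (h0 t).hasDerivWithinAt) (fun _ _ => trivial) h
      (Set.right_mem_Icc.2 hab)
  · intro h
    exact ODE_solution_unique_of_mem_Icc_left (v := fun t y => A t *ᵥ y)
      (g := fun _ => 0) (s := fun _ => Set.univ)
      (fun t ht => hL t (Set.Ioc_subset_Icc_self ht)) hc
      (fun t ht => (hx t (Set.Ioc_subset_Icc_self ht)).hasDerivWithinAt) (fun _ _ => trivial)
      continuousOn_const (fun t _ => (h0 t).hasDerivWithinAt) (fun _ _ => trivial) h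
      (Set.left_mem_Icc.2 hab)

end Norm

/-- Along a solution of `x' = A x - P y`, `y' = -Q x - Aᵀ y` with `P`, `Q` positive semidefinite,
`x ⬝ y` is nonincreasing; if it vanishes at both ends of an interval then `P y = 0` on the interval,
so `x` solves `x' = A x` there. -/
lemma hamiltonian_zero {m : Type*} [Fintype m] [DecidableEq m] {A P Q : ℝ → Matrix m m ℝ}
    (hA : Continuous A) (hP : ∀ t, (P t).PosSemidef) (hQ : ∀ t, (Q t).PosSemidef)
    {x y : ℝ → m → ℝ}
    (hx : ∀ t, HasDerivAt x (A t *ᵥ x t - P t *ᵥ y t) t)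
    (hy : ∀ t, HasDerivAt y (-(Q t *ᵥ x t) - (A t)ᵀ *ᵥ y t) t)
    {a b : ℝ} (hab : a < b) (ha : x a ⬝ᵥ y a = 0) (hb : x b ⬝ᵥ y b = 0) :
    x a = 0 ↔ x b = 0 := by
  have hd : ∀ t, HasDerivAt (fun t => x t ⬝ᵥ y t)
      (-(y t ⬝ᵥ P t *ᵥ y t) - x t ⬝ᵥ Q t *ᵥ x t) t := by
    intro t
    refine (hasDerivAt_dotProduct_s3 (hx t) (hy t)).congr_deriv ?_
    rw [sub_dotProduct, dotProduct_sub, dotProduct_neg, Matrix.mulVec_transpose,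
      dotProduct_comm (x t) (y t ᵥ* A t), ← Matrix.dotProduct_mulVec,
      dotProduct_comm (A t *ᵥ x t), dotProduct_comm (P t *ᵥ y t)]
    ring
  have hPn : ∀ t, 0 ≤ y t ⬝ᵥ P t *ᵥ y t := fun t => by
    simpa using (hP t).dotProduct_mulVec_nonneg (y t)
  have hQn : ∀ t, 0 ≤ x t ⬝ᵥ Q t *ᵥ x t := fun t => by
    simpa using (hQ t).dotProduct_mulVec_nonneg (x t)
  have hanti : Antitone fun t => x t ⬝ᵥ y t :=
    antitone_of_hasDerivAt_nonpos hd fun t => by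
      have := hPn t; have := hQn t; simp only [Pi.zero_apply]; linarith
  have hconst : ∀ t ∈ Set.Icc a b, x t ⬝ᵥ y t = 0 := fun t ht =>
    le_antisymm (ha ▸ hanti ht.1) (hb ▸ hanti ht.2)
  have hPy : ∀ t ∈ Set.Icc a b, P t *ᵥ y t = 0 := by
    intro t ht
    have h1 : HasDerivWithinAt (fun t => x t ⬝ᵥ y t) 0 (Set.Icc a b) t :=
      (hasDerivWithinAt_const t (Set.Icc a b) (0 : ℝ)).congr hconst (hconst t ht)
    have h2 := UniqueDiffWithinAt.eq_deriv _ (uniqueDiffOn_Icc hab t ht)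
      (hd t).hasDerivWithinAt h1
    have h3 : y t ⬝ᵥ P t *ᵥ y t = 0 := by
      have := hPn t; have := hQn t; linarith
    exact ((hP t).dotProduct_mulVec_zero_iff (y t)).1 (by simpa using h3)
  refine linear_ode_zero hA hab.le fun t ht => ?_
  have := hx t
  rwa [hPy t ht, sub_zero] at this

lemma isUnit_block {m : Type*} [Fintype m] [DecidableEq m] {A P Q X Y : ℝ → Matrix m m ℝ}
    (hA : Continuous A) (hP : ∀ t, (P t).PosSemidef) (hQ : ∀ t, (Q t).PosSemidef)
    (hX : ∀ t, HasMatDeriv X (A t * X t - P t * Y t) t)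
    (hY : ∀ t, HasMatDeriv Y (-(Q t * X t) - (A t)ᵀ * Y t) t)
    {s : ℝ} (hXs : X s = 1) (hYs : Y s = 0) (τ : ℝ) : IsUnit (X τ) := by
  rw [← Matrix.mulVec_injective_iff_isUnit]
  refine (injective_iff_map_eq_zero (X τ).mulVecLin).2 fun v hv => ?_
  rw [Matrix.mulVecLin_apply] at hv
  have hx : ∀ t, HasDerivAt (fun t => X t *ᵥ v) (A t *ᵥ (X t *ᵥ v) - P t *ᵥ (Y t *ᵥ v)) t :=
    fun t => ((hX t).mulVec v).congr_deriv (by simp [Matrix.sub_mulVec])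
  have hy : ∀ t, HasDerivAt (fun t => Y t *ᵥ v)
      (-(Q t *ᵥ (X t *ᵥ v)) - (A t)ᵀ *ᵥ (Y t *ᵥ v)) t :=
    fun t => ((hY t).mulVec v).congr_deriv (by simp [Matrix.sub_mulVec, Matrix.neg_mulVec])
  have hs0 : (X s *ᵥ v) ⬝ᵥ (Y s *ᵥ v) = 0 := by simp [hYs]
  have hτ0 : (X τ *ᵥ v) ⬝ᵥ (Y τ *ᵥ v) = 0 := by simp [hv]
  have key : X s *ᵥ v = 0 := by
    rcases lt_trichotomy s τ with h | h | h
    · exact (hamiltonian_zero hA hP hQ hx hy h hs0 hτ0).2 hv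
    · rw [h]; exact hv
    · exact (hamiltonian_zero hA hP hQ hx hy h hτ0 hs0).1 hv
  simpa [hXs] using key

/-- The symplectic pairing of two solutions of the Hamiltonian system is constant. -/
lemma pairing_const {m : Type*} [Fintype m] {A P Q X₁ Y₁ X₂ Y₂ : ℝ → Matrix m m ℝ}
    (hP : ∀ t, (P t)ᵀ = P t) (hQ : ∀ t, (Q t)ᵀ = Q t)
    (hX₁ : ∀ t, HasMatDeriv X₁ (A t * X₁ t - P t * Y₁ t) t)
    (hY₁ : ∀ t, HasMatDeriv Y₁ (-(Q t * X₁ t) - (A t)ᵀ * Y₁ t) t)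
    (hX₂ : ∀ t, HasMatDeriv X₂ (A t * X₂ t - P t * Y₂ t) t)
    (hY₂ : ∀ t, HasMatDeriv Y₂ (-(Q t * X₂ t) - (A t)ᵀ * Y₂ t) t) (a b : ℝ) :
    (X₁ a)ᵀ * Y₂ a - (Y₁ a)ᵀ * X₂ a = (X₁ b)ᵀ * Y₂ b - (Y₁ b)ᵀ * X₂ b := by
  refine HasMatDeriv.eq_of_zero (X := fun t => (X₁ t)ᵀ * Y₂ t - (Y₁ t)ᵀ * X₂ t) (fun t => ?_) a b
  have h := ((hX₁ t).transpose.mul (hY₂ t)).sub ((hY₁ t).transpose.mul (hX₂ t))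
  convert h using 1
  simp only [Matrix.transpose_sub, Matrix.transpose_mul, Matrix.transpose_neg, hP t, hQ t,
    Matrix.transpose_transpose]
  noncomm_ring

/-- The symplectic relations turn the quotient-rule expression for `(X⁻¹ U)'` into
`-X⁻¹ P X⁻ᵀ`. -/
lemma inv_mul_identity {m : Type*} [Fintype m] [DecidableEq m] {A P X Y U V : Matrix m m ℝ}
    (hu : IsUnit X) (h₁ : Xᵀ * V - Yᵀ * U = 1) (h₂ : Xᵀ * Y = Yᵀ * X) :
    -(X⁻¹ * (A * X - P * Y) * X⁻¹) * U + X⁻¹ * (A * U - P * V) = -(X⁻¹ * P * (X⁻¹)ᵀ) := by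
  have hd : IsUnit X.det := (Matrix.isUnit_iff_isUnit_det X).1 hu
  have hr : X * X⁻¹ = 1 := Matrix.mul_nonsing_inv X hd
  have hT : (X⁻¹)ᵀ * Xᵀ = 1 := by rw [← Matrix.transpose_mul, hr, Matrix.transpose_one]
  have hYX : Y * X⁻¹ = (X⁻¹)ᵀ * Yᵀ := by
    calc Y * X⁻¹ = ((X⁻¹)ᵀ * Xᵀ) * Y * X⁻¹ := by rw [hT, Matrix.one_mul]
      _ = (X⁻¹)ᵀ * (Xᵀ * Y) * X⁻¹ := by simp only [Matrix.mul_assoc]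
      _ = (X⁻¹)ᵀ * Yᵀ * (X * X⁻¹) := by rw [h₂]; simp only [Matrix.mul_assoc]
      _ = (X⁻¹)ᵀ * Yᵀ := by rw [hr, Matrix.mul_one]
  have hV : V = (X⁻¹)ᵀ + Y * X⁻¹ * U := by
    calc V = ((X⁻¹)ᵀ * Xᵀ) * V := by rw [hT, Matrix.one_mul]
      _ = (X⁻¹)ᵀ * (Xᵀ * V - Yᵀ * U) + (X⁻¹)ᵀ * Yᵀ * U := by noncomm_ring
      _ = (X⁻¹)ᵀ + Y * X⁻¹ * U := by rw [h₁, Matrix.mul_one, hYX]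
  calc -(X⁻¹ * (A * X - P * Y) * X⁻¹) * U + X⁻¹ * (A * U - P * V)
      = -(X⁻¹ * A * (X * X⁻¹) * U) + X⁻¹ * A * U + X⁻¹ * P * (Y * X⁻¹ * U - V) := by
        noncomm_ring
    _ = -(X⁻¹ * P * (X⁻¹)ᵀ) := by
        rw [hr]
        conv_lhs => rw [hV]
        noncomm_ring

theorem stmt_3 {n p : ℕ} (hn : 1 ≤ n) (hp : 1 ≤ p)
    (A Q : ℝ → Matrix (Fin n) (Fin n) ℝ) (B : ℝ → Matrix (Fin n) (Fin p) ℝ)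
    (hA : Continuous A) (hB : Continuous B) (hQ : Continuous Q)
    (hQpsd : ∀ t, (Q t).PosSemidef)
    (Φ : ℝ → ℝ → Matrix (Fin n ⊕ Fin n) (Fin n ⊕ Fin n) ℝ)
    (hΦ : IsSTM (fun t => fromBlocks (A t) (-(B t * (B t)ᵀ)) (-(Q t)) (-(A t)ᵀ)) Φ)
    (t s : ℝ) :
    (∀ τ σ : ℝ, IsUnit ((Φ τ σ).toBlocks₁₁)) ∧
    ∀ i j : Fin n,
      (-(((Φ t s).toBlocks₁₁)⁻¹ * (Φ t s).toBlocks₁₂)) i j =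
        ∫ τ in s..t,
          (((Φ τ s).toBlocks₁₁)⁻¹ * (B τ * (B τ)ᵀ) * ((((Φ τ s).toBlocks₁₁)⁻¹)ᵀ)) i j := by
  obtain ⟨h1, hd⟩ := hΦ
  have hP : ∀ t, (B t * (B t)ᵀ).PosSemidef := fun t => by
    simpa using Matrix.posSemidef_self_mul_conjTranspose (B t)
  have hPt : ∀ t, (B t * (B t)ᵀ)ᵀ = B t * (B t)ᵀ := fun t => by simp
  have hQt : ∀ t, (Q t)ᵀ = Q t := fun t => by simpa using (hQpsd t).isHermitian.eq
  have hblk : ∀ s t, fromBlocks (A t) (-(B t * (B t)ᵀ)) (-(Q t)) (-(A t)ᵀ) * Φ t s =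
      fromBlocks
        (A t * (Φ t s).toBlocks₁₁ - B t * (B t)ᵀ * (Φ t s).toBlocks₂₁)
        (A t * (Φ t s).toBlocks₁₂ - B t * (B t)ᵀ * (Φ t s).toBlocks₂₂)
        (-(Q t * (Φ t s).toBlocks₁₁) - (A t)ᵀ * (Φ t s).toBlocks₂₁)
        (-(Q t * (Φ t s).toBlocks₁₂) - (A t)ᵀ * (Φ t s).toBlocks₂₂) := fun s t => by
    conv_lhs => rw [← fromBlocks_toBlocks (Φ t s), fromBlocks_multiply]
    simp only [Matrix.neg_mul, sub_eq_add_neg]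
  have hX : ∀ s t, HasMatDeriv (fun t => (Φ t s).toBlocks₁₁)
      (A t * (Φ t s).toBlocks₁₁ - B t * (B t)ᵀ * (Φ t s).toBlocks₂₁) t := fun s t i j => by
    have h := hd s t (Sum.inl i) (Sum.inl j)
    simp only [hblk, fromBlocks_apply₁₁] at h
    exact h
  have hU : ∀ s t, HasMatDeriv (fun t => (Φ t s).toBlocks₁₂)
      (A t * (Φ t s).toBlocks₁₂ - B t * (B t)ᵀ * (Φ t s).toBlocks₂₂) t := fun s t i j => by
    have h := hd s t (Sum.inl i) (Sum.inr j)
    simp only [hblk, fromBlocks_apply₁₂] at h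
    exact h
  have hY : ∀ s t, HasMatDeriv (fun t => (Φ t s).toBlocks₂₁)
      (-(Q t * (Φ t s).toBlocks₁₁) - (A t)ᵀ * (Φ t s).toBlocks₂₁) t := fun s t i j => by
    have h := hd s t (Sum.inr i) (Sum.inl j)
    simp only [hblk, fromBlocks_apply₂₁] at h
    exact h
  have hV : ∀ s t, HasMatDeriv (fun t => (Φ t s).toBlocks₂₂)
      (-(Q t * (Φ t s).toBlocks₁₂) - (A t)ᵀ * (Φ t s).toBlocks₂₂) t := fun s t i j => by
    have h := hd s t (Sum.inr i) (Sum.inr j)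
    simp only [hblk, fromBlocks_apply₂₂] at h
    exact h
  have hs₁₁ : ∀ s, (Φ s s).toBlocks₁₁ = 1 := fun s => by
    rw [h1, ← fromBlocks_one, toBlocks_fromBlocks₁₁]
  have hs₁₂ : ∀ s, (Φ s s).toBlocks₁₂ = 0 := fun s => by
    rw [h1, ← fromBlocks_one, toBlocks_fromBlocks₁₂]
  have hs₂₁ : ∀ s, (Φ s s).toBlocks₂₁ = 0 := fun s => by
    rw [h1, ← fromBlocks_one, toBlocks_fromBlocks₂₁]
  have hs₂₂ : ∀ s, (Φ s s).toBlocks₂₂ = 1 := fun s => by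
    rw [h1, ← fromBlocks_one, toBlocks_fromBlocks₂₂]
  have hunit : ∀ τ σ : ℝ, IsUnit ((Φ τ σ).toBlocks₁₁) := fun τ σ =>
    isUnit_block hA hP hQpsd (hX σ) (hY σ) (hs₁₁ σ) (hs₂₁ σ) τ
  refine ⟨hunit, fun i j => ?_⟩
  have hW : ∀ τ, HasMatDeriv (fun τ => ((Φ τ s).toBlocks₁₁)⁻¹ * (Φ τ s).toBlocks₁₂)
      (-(((Φ τ s).toBlocks₁₁)⁻¹ * (B τ * (B τ)ᵀ) * (((Φ τ s).toBlocks₁₁)⁻¹)ᵀ)) τ := by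
    intro τ
    have h₁ := pairing_const hPt hQt (hX s) (hY s) (hU s) (hV s) τ s
    have h₂ := pairing_const hPt hQt (hX s) (hY s) (hX s) (hY s) τ s
    simp only [hs₁₁, hs₁₂, hs₂₁, hs₂₂, Matrix.transpose_one, Matrix.transpose_zero,
      Matrix.mul_zero, Matrix.zero_mul, Matrix.mul_one, sub_zero, sub_self] at h₁ h₂
    rw [← inv_mul_identity (A := A τ) (hunit τ s) h₁ (sub_eq_zero.1 h₂)]
    exact ((hX s τ).inv (hunit τ s)).mul (hU s τ)
  have hinv : Continuous fun τ => ((Φ τ s).toBlocks₁₁)⁻¹ :=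
    continuous_matrix fun a b => continuous_iff_continuousAt.2 fun τ =>
      ((hX s τ).inv (hunit τ s) a b).continuousAt
  have hcont : Continuous fun τ =>
      (((Φ τ s).toBlocks₁₁)⁻¹ * (B τ * (B τ)ᵀ) * ((((Φ τ s).toBlocks₁₁)⁻¹)ᵀ)) i j :=
    ((hinv.matrix_mul (hB.matrix_mul hB.matrix_transpose)).matrix_mul
      hinv.matrix_transpose).matrix_elem i j
  rw [intervalIntegral.integral_eq_sub_of_hasDerivAt
    (f := fun τ => -(((Φ τ s).toBlocks₁₁)⁻¹ * (Φ τ s).toBlocks₁₂) i j)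
    (fun τ _ => (hW τ i j).neg.congr_deriv (by simp)) (hcont.intervalIntegrable s t)]
  simp [hs₁₂]
end

section
/- Assume (A(t), B(t)) is totally controllable on [0,1]. Then for all t, s ∈ [0,1] with t ≠ s, the block Φ₁₂(t,s) is invertible; moreover, for all t, s ∈ ℝ, −Φ₁₁(t,s)⁻¹Φ₁₂(t,s) = Φ₁₂(s,t)Φ₂₂(s,t)⁻¹. -/
/-!
Let `z = (x, y)` solve the Hamiltonian system `x' = A x - B Bᵀ y`, `y' = -Q x - Aᵀ y`. Then
`(x ⬝ y)' = -(|Bᵀ y|² + xᵀ Q x) ≤ 0`, so if `x ⬝ y` vanishes at two times `a < b`, it vanishes on all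
of `[a, b]`, and therefore `Bᵀ y = 0` and `Q x = 0` there (`ham_degenerate`). On `[a, b]` the
system then decouples into `x' = A x` and `y' = -Aᵀ y`.

* A kernel vector of `Φ₁₁(t,s)` or `Φ₂₂(t,s)` gives a trajectory for which `x ⬝ y` vanishes at both
  `s` and `t`; uniqueness for the decoupled linear equation forces the vector to be zero. So these
  two blocks are always invertible, and the identity between the blocks is the upper right block of
  `Φ(t,s) Φ(s,t) = 1`.
* A kernel vector `v` of `Φ₁₂(t,s)` gives a trajectory with `x(s) = x(t) = 0` and `y(s) = v`.
  Differentiating `Bᵀ y = 0` repeatedly along `y' = -Aᵀ y` gives `Γ_kᵀ y = 0` for all `k < n`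
  (`ctrb_orthogonal`), so `y` vanishes wherever `Θₙ` has rank `n`. By total controllability there is
  such a time between `s` and `t`, and uniqueness for `y' = -Aᵀ y` gives `v = 0`.
-/

open Matrix

/-- `IsCtrbMatSeq A B Γ`: `Γ 0 = B` and `Γ k = -A Γ (k-1) + Γ' (k-1)` for `1 ≤ k ≤ n`,
i.e. the derivative of each entry of `Γ k` is the corresponding entry of `Γ (k+1) + A * Γ k`,
for `k < n`. -/
def IsCtrbMatSeq {n p : ℕ} (A : ℝ → Matrix (Fin n) (Fin n) ℝ)
    (B : ℝ → Matrix (Fin n) (Fin p) ℝ) (Γ : ℕ → ℝ → Matrix (Fin n) (Fin p) ℝ) : Prop :=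
  Γ 0 = B ∧
  ∀ k < n, ∀ (t : ℝ) (i : Fin n) (j : Fin p),
    HasDerivAt (fun τ : ℝ => Γ k τ i j) ((Γ (k + 1) t + A t * Γ k t) i j) t

/-- The controllability matrix `Θₙ(t) = [Γ₀(t) Γ₁(t) ⋯ Γ_{n−1}(t)]`. -/
def ctrbMat {n p : ℕ} (Γ : ℕ → ℝ → Matrix (Fin n) (Fin p) ℝ) (t : ℝ) :
    Matrix (Fin n) (Fin n × Fin p) ℝ :=
  Matrix.of fun i kj => Γ (kj.1 : ℕ) t i kj.2

/-- Total controllability of `(A(t), B(t))` on `[0,1]`. -/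
def TotallyControllable {n p : ℕ} (Γ : ℕ → ℝ → Matrix (Fin n) (Fin p) ℝ) : Prop :=
  ∀ t₀ t₁ : ℝ, 0 ≤ t₀ → t₀ < t₁ → t₁ ≤ 1 →
    ∃ t ∈ Set.Ioo t₀ t₁, (ctrbMat Γ t).rank = n

/-! ### Calculus and linear algebra preliminaries -/

lemma hasDerivAt_dotProduct_s4 {ι : Type*} [Fintype ι] {u v : ℝ → ι → ℝ} {u' v' : ι → ℝ} {t : ℝ}
    (hu : HasDerivAt u u' t) (hv : HasDerivAt v v' t) :
    HasDerivAt (fun τ => u τ ⬝ᵥ v τ) (u' ⬝ᵥ v t + u t ⬝ᵥ v') t := by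
  rw [hasDerivAt_pi] at hu hv
  have h := HasDerivAt.fun_sum (u := Finset.univ) fun i _ => (hu i).mul (hv i)
  simpa only [dotProduct, ← Finset.sum_add_distrib, Pi.mul_apply] using h

/-- A function vanishing on `[a, b]` has zero derivative there, the endpoints included. -/
lemma deriv_zero_of_zero_on_Icc {f : ℝ → ℝ} {f' a b t : ℝ} (hab : a < b)
    (h0 : ∀ τ ∈ Set.Icc a b, f τ = 0) (ht : t ∈ Set.Icc a b) (hf : HasDerivAt f f' t) :
    f' = 0 := by
  have h2 : HasDerivWithinAt f 0 (Set.Icc a b) t :=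
    (hasDerivWithinAt_const t (Set.Icc a b) (0 : ℝ)).congr h0 (h0 t ht)
  exact (uniqueDiffOn_Icc hab t ht).eq_deriv _ hf.hasDerivWithinAt h2

/-- A linear equation `x' = F x` is Lipschitz in `x`, uniformly in time on compact intervals, so a
solution on `[a, b]` vanishing at one end vanishes at the other. -/
lemma linear_unique {ι : Type*} [Fintype ι] {F : ℝ → Matrix ι ι ℝ}
    (hF : Continuous F) {x : ℝ → ι → ℝ} {a b : ℝ} (hab : a ≤ b)
    (hx : ∀ t ∈ Set.Icc a b, HasDerivAt x (F t *ᵥ x t) t) : x a = 0 ↔ x b = 0 := by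
  let _ : NormedAddCommGroup (Matrix ι ι ℝ) := Matrix.linftyOpNormedAddCommGroup
  obtain ⟨C, hC⟩ := (isCompact_Icc (a := a) (b := b)).exists_bound_of_continuousOn hF.continuousOn
  have hlip : ∀ t ∈ Set.Icc a b,
      LipschitzOnWith C.toNNReal (fun v : ι → ℝ => F t *ᵥ v) Set.univ := by
    intro t ht
    refine LipschitzOnWith.of_dist_le_mul fun u _ v _ => ?_
    rw [dist_eq_norm, dist_eq_norm, ← Matrix.mulVec_sub]
    refine (Matrix.linfty_opNorm_mulVec _ _).trans ?_
    gcongr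
    exact (hC t ht).trans (Real.le_coe_toNNReal C)
  have hcont : ContinuousOn x (Set.Icc a b) :=
    fun t ht => (hx t ht).continuousAt.continuousWithinAt
  have h0 : ∀ (s : Set ℝ) (t : ℝ),
      HasDerivWithinAt (fun _ : ℝ => (0 : ι → ℝ)) (F t *ᵥ (0 : ι → ℝ)) s t := by
    intro s t
    rw [Matrix.mulVec_zero]
    exact hasDerivWithinAt_const _ _ _
  constructor
  · intro ha
    exact ODE_solution_unique_of_mem_Icc_right (v := fun t v => F t *ᵥ v) (s := fun _ => Set.univ)
      (fun t ht => hlip t (Set.Ico_subset_Icc_self ht)) hcont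
      (fun t ht => (hx t (Set.Ico_subset_Icc_self ht)).hasDerivWithinAt) (fun _ _ => trivial)
      continuousOn_const (fun t _ => h0 _ t) (fun _ _ => trivial) ha (Set.right_mem_Icc.2 hab)
  · intro hb
    exact ODE_solution_unique_of_mem_Icc_left (v := fun t v => F t *ᵥ v) (s := fun _ => Set.univ)
      (fun t ht => hlip t (Set.Ioc_subset_Icc_self ht)) hcont
      (fun t ht => (hx t (Set.Ioc_subset_Icc_self ht)).hasDerivWithinAt) (fun _ _ => trivial)
      continuousOn_const (fun t _ => h0 _ t) (fun _ _ => trivial) hb (Set.left_mem_Icc.2 hab)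

lemma eq_zero_of_vecMul_of_rank {m : Type*} [Fintype m] {n : ℕ} {M : Matrix (Fin n) m ℝ}
    (hM : M.rank = n) {y : Fin n → ℝ} (hy : y ᵥ* M = 0) : y = 0 := by
  have hli : LinearIndependent ℝ M.row := by
    rw [linearIndependent_iff_card_eq_finrank_span, Fintype.card_fin, Set.finrank,
      ← Matrix.rank_eq_finrank_span_row, hM]
  exact Matrix.vecMul_injective_iff.2 hli (by simpa using hy)

lemma isUnit_of_mulVec_eq_zero {n : ℕ} {M : Matrix (Fin n) (Fin n) ℝ}
    (h : ∀ v, M *ᵥ v = 0 → v = 0) : IsUnit M := by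
  rw [← Matrix.mulVec_injective_iff_isUnit]
  exact (injective_iff_map_eq_zero M.mulVecLin).2 h

/-! ### State transition matrices -/

lemma IsSTM.hasDerivAt_mulVec {ι : Type*} [Fintype ι] [DecidableEq ι] {F : ℝ → Matrix ι ι ℝ}
    {Φ : ℝ → ℝ → Matrix ι ι ℝ} (h : IsSTM F Φ) (s t : ℝ) (w : ι → ℝ) :
    HasDerivAt (fun τ => Φ τ s *ᵥ w) (F t *ᵥ (Φ t s *ᵥ w)) t := by
  rw [hasDerivAt_pi]
  intro i
  have h1 := HasDerivAt.fun_sum (u := Finset.univ) fun j _ => (h.2 s t i j).mul_const (w j)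
  rw [Matrix.mulVec_mulVec]
  exact h1

/-- For fixed `w`, both `τ ↦ Φ(τ,s) Φ(s,t) w` and `τ ↦ Φ(τ,t) w` solve the equation and agree at
`τ = s`, hence at `τ = t`. -/
lemma IsSTM.mul_swap {ι : Type*} [Fintype ι] [DecidableEq ι] {F : ℝ → Matrix ι ι ℝ}
    {Φ : ℝ → ℝ → Matrix ι ι ℝ} (hF : Continuous F) (h : IsSTM F Φ) (s t : ℝ) :
    Φ t s * Φ s t = 1 := by
  refine Matrix.ext_of_mulVec_single fun i => ?_
  set w : ι → ℝ := Pi.single i 1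
  have hd : ∀ τ, HasDerivAt (fun τ => Φ τ s *ᵥ (Φ s t *ᵥ w) - Φ τ t *ᵥ w)
      (F τ *ᵥ (Φ τ s *ᵥ (Φ s t *ᵥ w) - Φ τ t *ᵥ w)) τ := by
    intro τ
    rw [Matrix.mulVec_sub]
    exact (h.hasDerivAt_mulVec s τ _).sub (h.hasDerivAt_mulVec t τ _)
  have hs : Φ s s *ᵥ (Φ s t *ᵥ w) - Φ s t *ᵥ w = 0 := by simp [h.1]
  have ht : Φ t s *ᵥ (Φ s t *ᵥ w) - Φ t t *ᵥ w = 0 := by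
    rcases le_total s t with hst | hst
    · exact (linear_unique hF hst fun τ _ => hd τ).1 hs
    · exact (linear_unique hF hst fun τ _ => hd τ).2 hs
  rw [h.1 t] at ht
  rw [← Matrix.mulVec_mulVec]
  exact sub_eq_zero.1 ht

/-! ### Hamiltonian trajectories -/

/-- `(x, y)` solves the Hamiltonian system `x' = A x - B Bᵀ y`, `y' = -Q x - Aᵀ y` on `ℝ`. -/
def IsHamTraj {n p : ℕ} (A Q : ℝ → Matrix (Fin n) (Fin n) ℝ) (B : ℝ → Matrix (Fin n) (Fin p) ℝ)
    (x y : ℝ → Fin n → ℝ) : Prop :=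
  ∀ t, HasDerivAt x (A t *ᵥ x t - B t *ᵥ ((B t)ᵀ *ᵥ y t)) t ∧
    HasDerivAt y (-(Q t *ᵥ x t) - (A t)ᵀ *ᵥ y t) t

section Trajectories

variable {n p : ℕ} {A Q : ℝ → Matrix (Fin n) (Fin n) ℝ} {B : ℝ → Matrix (Fin n) (Fin p) ℝ}
  {x y : ℝ → Fin n → ℝ} {a b : ℝ}

lemma IsSTM.isHamTraj {Φ : ℝ → ℝ → Matrix (Fin n ⊕ Fin n) (Fin n ⊕ Fin n) ℝ}
    (hΦ : IsSTM (fun t => fromBlocks (A t) (-(B t * (B t)ᵀ)) (-(Q t)) (-(A t)ᵀ)) Φ)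
    (s : ℝ) (u v : Fin n → ℝ) :
    IsHamTraj A Q B (fun t => (Φ t s).toBlocks₁₁ *ᵥ u + (Φ t s).toBlocks₁₂ *ᵥ v)
      (fun t => (Φ t s).toBlocks₂₁ *ᵥ u + (Φ t s).toBlocks₂₂ *ᵥ v) := by
  have hz : ∀ t, Φ t s *ᵥ Sum.elim u v =
      Sum.elim ((Φ t s).toBlocks₁₁ *ᵥ u + (Φ t s).toBlocks₁₂ *ᵥ v)
        ((Φ t s).toBlocks₂₁ *ᵥ u + (Φ t s).toBlocks₂₂ *ᵥ v) := by
    intro t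
    conv_lhs => rw [← fromBlocks_toBlocks (Φ t s)]
    rw [fromBlocks_mulVec]
    simp
  intro t
  have h := hΦ.hasDerivAt_mulVec s t (Sum.elim u v)
  simp only [hz, fromBlocks_mulVec, Sum.elim_comp_inl, Sum.elim_comp_inr] at h
  rw [hasDerivAt_pi] at h
  constructor
  · rw [hasDerivAt_pi]
    intro i
    have := h (Sum.inl i)
    simpa [sub_eq_add_neg, Matrix.neg_mulVec, Matrix.mulVec_mulVec] using this
  · rw [hasDerivAt_pi]
    intro i
    have := h (Sum.inr i)
    simpa [sub_eq_add_neg, Matrix.neg_mulVec, Matrix.mulVec_mulVec] using this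

/-- `x ⬝ y` is nonincreasing along a trajectory; if it vanishes at both ends of `[a, b]`, its
derivative `-(|Bᵀ y|² + xᵀ Q x)` vanishes on `[a, b]`. -/
lemma ham_degenerate (hQ : ∀ t, (Q t).PosSemidef) (h : IsHamTraj A Q B x y) (hab : a < b)
    (ha : x a ⬝ᵥ y a = 0) (hb : x b ⬝ᵥ y b = 0) :
    ∀ t ∈ Set.Icc a b, (B t)ᵀ *ᵥ y t = 0 ∧ Q t *ᵥ x t = 0 := by
  have hd : ∀ t, HasDerivAt (fun τ => x τ ⬝ᵥ y τ)
      (-(((B t)ᵀ *ᵥ y t) ⬝ᵥ ((B t)ᵀ *ᵥ y t) + x t ⬝ᵥ (Q t *ᵥ x t))) t := by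
    intro t
    convert hasDerivAt_dotProduct_s4 (h t).1 (h t).2 using 1
    have e1 : (A t *ᵥ x t) ⬝ᵥ y t = x t ⬝ᵥ ((A t)ᵀ *ᵥ y t) := by
      rw [Matrix.dotProduct_mulVec, Matrix.vecMul_transpose]
    have e2 : (B t *ᵥ ((B t)ᵀ *ᵥ y t)) ⬝ᵥ y t = ((B t)ᵀ *ᵥ y t) ⬝ᵥ ((B t)ᵀ *ᵥ y t) := by
      rw [Matrix.dotProduct_mulVec ((B t)ᵀ *ᵥ y t), Matrix.vecMul_transpose]
    rw [sub_dotProduct, dotProduct_sub, dotProduct_neg, e1, e2]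
    ring
  have hB0 : ∀ t, 0 ≤ ((B t)ᵀ *ᵥ y t) ⬝ᵥ ((B t)ᵀ *ᵥ y t) := fun t =>
    Finset.sum_nonneg fun i _ => mul_self_nonneg _
  have hQ0 : ∀ t, 0 ≤ x t ⬝ᵥ (Q t *ᵥ x t) := fun t => by
    simpa using (hQ t).dotProduct_mulVec_nonneg (x t)
  have hanti : Antitone fun τ => x τ ⬝ᵥ y τ :=
    antitone_of_hasDerivAt_nonpos hd fun t => neg_nonpos.2 (add_nonneg (hB0 t) (hQ0 t))
  have hzero : ∀ τ ∈ Set.Icc a b, x τ ⬝ᵥ y τ = 0 := fun τ hτ =>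
    le_antisymm (ha ▸ hanti hτ.1) (hb ▸ hanti hτ.2)
  intro t ht
  have h0 := deriv_zero_of_zero_on_Icc hab hzero ht (hd t)
  have h1 := hB0 t
  have h2 := hQ0 t
  refine ⟨dotProduct_self_eq_zero.1 (by linarith), ?_⟩
  rw [← (hQ t).dotProduct_mulVec_zero_iff]
  simp only [star_trivial]
  linarith

/-- For a degenerate trajectory `x' = A x` on `[a, b]`, so `x` cannot become or cease to be zero. -/
lemma ham_x_zero_iff (hA : Continuous A) (hQ : ∀ t, (Q t).PosSemidef) (h : IsHamTraj A Q B x y)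
    (hab : a < b) (ha : x a ⬝ᵥ y a = 0) (hb : x b ⬝ᵥ y b = 0) : x a = 0 ↔ x b = 0 := by
  have hdeg := ham_degenerate hQ h hab ha hb
  refine linear_unique hA hab.le fun t ht => ?_
  simpa [(hdeg t ht).1] using (h t).1

/-- For a degenerate trajectory `y' = -Aᵀ y` on `[a, b]`, so `y` cannot become or cease to be
zero. -/
lemma ham_y_zero_iff (hA : Continuous A) (hQ : ∀ t, (Q t).PosSemidef) (h : IsHamTraj A Q B x y)
    (hab : a < b) (ha : x a ⬝ᵥ y a = 0) (hb : x b ⬝ᵥ y b = 0) : y a = 0 ↔ y b = 0 := by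
  have hdeg := ham_degenerate hQ h hab ha hb
  refine linear_unique (F := fun t => -(A t)ᵀ) hA.matrix_transpose.neg hab.le fun t ht => ?_
  simpa [(hdeg t ht).2, Matrix.neg_mulVec] using (h t).2

/-- Induction on `k`: the derivative of `Γ_kᵀ y` along `y' = -Aᵀ y` is `Γ_{k+1}ᵀ y`. -/
lemma ctrb_orthogonal {Γ : ℕ → ℝ → Matrix (Fin n) (Fin p) ℝ} (hΓ : IsCtrbMatSeq A B Γ)
    (hab : a < b) (hB : ∀ t ∈ Set.Icc a b, (B t)ᵀ *ᵥ y t = 0)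
    (hy : ∀ t ∈ Set.Icc a b, HasDerivAt y (-((A t)ᵀ *ᵥ y t)) t) :
    ∀ k ≤ n, ∀ t ∈ Set.Icc a b, y t ᵥ* Γ k t = 0 := by
  intro k
  induction k with
  | zero =>
    intro _ t ht
    rw [hΓ.1, ← Matrix.mulVec_transpose]
    exact hB t ht
  | succ k ih =>
    intro hk t ht
    funext j
    have hcol : HasDerivAt (fun τ => fun i => Γ k τ i j)
        (fun i => (Γ (k + 1) t + A t * Γ k t) i j) t :=
      hasDerivAt_pi.2 fun i => hΓ.2 k hk t i j
    have hd := hasDerivAt_dotProduct_s4 (hy t ht) hcol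
    have h0 := deriv_zero_of_zero_on_Icc hab
      (fun τ hτ => congrFun (ih (Nat.le_of_succ_le hk) τ hτ) j) ht hd
    have e : y t ⬝ᵥ (fun i => (Γ (k + 1) t + A t * Γ k t) i j) =
        (y t ᵥ* Γ (k + 1) t) j + (((A t)ᵀ *ᵥ y t) ᵥ* Γ k t) j := by
      rw [Matrix.mulVec_transpose, Matrix.vecMul_vecMul, ← Pi.add_apply, ← Matrix.vecMul_add]
      rfl
    rw [e, neg_dotProduct] at h0
    have e2 : ((A t)ᵀ *ᵥ y t) ⬝ᵥ (fun i => Γ k t i j) = (((A t)ᵀ *ᵥ y t) ᵥ* Γ k t) j := rfl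
    rw [e2] at h0
    simpa using h0

/-- If `x` vanishes at both ends of `[a, b] ⊆ [0, 1]`, then so does `y`: it vanishes at a time where
`Θₙ` has full rank, and it solves `y' = -Aᵀ y` on `[a, b]`. -/
lemma ham_y_zero_of_ctrb {Γ : ℕ → ℝ → Matrix (Fin n) (Fin p) ℝ} (hΓ : IsCtrbMatSeq A B Γ)
    (hTC : TotallyControllable Γ) (hA : Continuous A)
    (hQ : ∀ t, (Q t).PosSemidef) (h : IsHamTraj A Q B x y)
    (h0a : 0 ≤ a) (hab : a < b) (hb1 : b ≤ 1) (ha : x a = 0) (hb : x b = 0) :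
    y a = 0 ∧ y b = 0 := by
  have hdeg := ham_degenerate hQ h hab (by simp [ha]) (by simp [hb])
  have horth := ctrb_orthogonal hΓ hab (fun t ht => (hdeg t ht).1) fun t ht => by
    simpa [(hdeg t ht).2] using (h t).2
  have hfull : ∀ t ∈ Set.Icc a b, (ctrbMat Γ t).rank = n → y t = 0 := by
    intro t ht hr
    refine eq_zero_of_vecMul_of_rank hr ?_
    funext kj
    exact congrFun (horth kj.1 kj.1.2.le t ht) kj.2
  obtain ⟨τ, hτ, hr⟩ := hTC a b h0a hab hb1
  have hyτ := hfull τ ⟨hτ.1.le, hτ.2.le⟩ hr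
  have hlin : ∀ t ∈ Set.Icc a b, HasDerivAt y ((-(A t)ᵀ) *ᵥ y t) t := fun t ht => by
    simpa [(hdeg t ht).2, Matrix.neg_mulVec] using (h t).2
  have hcont : Continuous fun t => -(A t)ᵀ := hA.matrix_transpose.neg
  exact ⟨(linear_unique hcont hτ.1.le fun t ht => hlin t ⟨ht.1, ht.2.trans hτ.2.le⟩).2 hyτ,
    (linear_unique hcont hτ.2.le fun t ht => hlin t ⟨hτ.1.le.trans ht.1, ht.2⟩).1 hyτ⟩

end Trajectories

/-! ### The blocks of the transition matrix -/

theorem stmt_4 {n p : ℕ} (hn : 1 ≤ n) (hp : 1 ≤ p)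
    (A Q : ℝ → Matrix (Fin n) (Fin n) ℝ) (B : ℝ → Matrix (Fin n) (Fin p) ℝ)
    (hA : Continuous A) (hB : Continuous B) (hQ : Continuous Q)
    (hQpsd : ∀ t, (Q t).PosSemidef)
    (hAsm : ∀ i j, ContDiff ℝ (n - 1 : ℕ) fun t => A t i j)
    (hBsm : ∀ i j, ContDiff ℝ (n : ℕ) fun t => B t i j)
    (Γ : ℕ → ℝ → Matrix (Fin n) (Fin p) ℝ)
    (hΓ : IsCtrbMatSeq A B Γ)
    (hTC : TotallyControllable Γ)
    (Φ : ℝ → ℝ → Matrix (Fin n ⊕ Fin n) (Fin n ⊕ Fin n) ℝ)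
    (hΦ : IsSTM (fun t => fromBlocks (A t) (-(B t * (B t)ᵀ)) (-(Q t)) (-(A t)ᵀ)) Φ) :
    (∀ t ∈ Set.Icc (0:ℝ) 1, ∀ s ∈ Set.Icc (0:ℝ) 1, t ≠ s → IsUnit ((Φ t s).toBlocks₁₂)) ∧
    ∀ t s : ℝ,
      -(((Φ t s).toBlocks₁₁)⁻¹ * (Φ t s).toBlocks₁₂) =
        (Φ s t).toBlocks₁₂ * ((Φ s t).toBlocks₂₂)⁻¹ := by
  have hI11 : ∀ s, (Φ s s).toBlocks₁₁ = 1 := fun s => by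
    rw [hΦ.1, ← fromBlocks_one, toBlocks_fromBlocks₁₁]
  have hI12 : ∀ s, (Φ s s).toBlocks₁₂ = 0 := fun s => by
    rw [hΦ.1, ← fromBlocks_one, toBlocks_fromBlocks₁₂]
  have hI21 : ∀ s, (Φ s s).toBlocks₂₁ = 0 := fun s => by
    rw [hΦ.1, ← fromBlocks_one, toBlocks_fromBlocks₂₁]
  have hI22 : ∀ s, (Φ s s).toBlocks₂₂ = 1 := fun s => by
    rw [hΦ.1, ← fromBlocks_one, toBlocks_fromBlocks₂₂]
  have hU11 : ∀ t s, IsUnit (Φ t s).toBlocks₁₁ := by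
    intro t s
    refine isUnit_of_mulVec_eq_zero fun v hv => ?_
    have htr := hΦ.isHamTraj s v 0
    rcases lt_trichotomy s t with h | rfl | h
    · have := (ham_x_zero_iff hA hQpsd htr h (by simp [hI21]) (by simp [hv])).2 (by simp [hv])
      simpa [hI11] using this
    · simpa [hI11] using hv
    · have := (ham_x_zero_iff hA hQpsd htr h (by simp [hv]) (by simp [hI21])).1 (by simp [hv])
      simpa [hI11] using this
  have hU22 : ∀ t s, IsUnit (Φ t s).toBlocks₂₂ := by
    intro t s
    refine isUnit_of_mulVec_eq_zero fun v hv => ?_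
    have htr := hΦ.isHamTraj s 0 v
    rcases lt_trichotomy s t with h | rfl | h
    · have := (ham_y_zero_iff hA hQpsd htr h (by simp [hI12]) (by simp [hv])).2 (by simp [hv])
      simpa [hI22] using this
    · simpa [hI22] using hv
    · have := (ham_y_zero_iff hA hQpsd htr h (by simp [hv]) (by simp [hI12])).1 (by simp [hv])
      simpa [hI22] using this
  constructor
  · intro t ht s hs hts
    refine isUnit_of_mulVec_eq_zero fun v hv => ?_
    have htr := hΦ.isHamTraj s 0 v
    rcases lt_or_gt_of_ne hts with h | h
    · have := (ham_y_zero_of_ctrb hΓ hTC hA hQpsd htr ht.1 h hs.2 (by simp [hv])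
        (by simp [hI12])).2
      simpa [hI22] using this
    · have := (ham_y_zero_of_ctrb hΓ hTC hA hQpsd htr hs.1 h ht.2 (by simp [hI12])
        (by simp [hv])).1
      simpa [hI22] using this
  · intro t s
    have hF : Continuous fun t => fromBlocks (A t) (-(B t * (B t)ᵀ)) (-(Q t)) (-(A t)ᵀ) :=
      hA.matrix_fromBlocks (hB.matrix_mul hB.matrix_transpose).neg hQ.neg hA.matrix_transpose.neg
    have hmul := hΦ.mul_swap hF s t
    have h12 : (Φ t s).toBlocks₁₁ * (Φ s t).toBlocks₁₂ +
        (Φ t s).toBlocks₁₂ * (Φ s t).toBlocks₂₂ = 0 := by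
      rw [← fromBlocks_toBlocks (Φ t s), ← fromBlocks_toBlocks (Φ s t), fromBlocks_multiply,
        ← fromBlocks_one] at hmul
      exact (fromBlocks_inj.1 hmul).2.1
    have d1 := (Matrix.isUnit_iff_isUnit_det _).1 (hU11 t s)
    have d2 := (Matrix.isUnit_iff_isUnit_det _).1 (hU22 s t)
    have h' : (Φ t s).toBlocks₁₂ = -((Φ t s).toBlocks₁₁ * (Φ s t).toBlocks₁₂) *
        ((Φ s t).toBlocks₂₂)⁻¹ := by
      rw [← eq_neg_of_add_eq_zero_right h12, Matrix.mul_nonsing_inv_cancel_right _ _ d2]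
    rw [h', Matrix.neg_mul, Matrix.mul_neg, neg_neg, Matrix.mul_assoc,
      Matrix.nonsing_inv_mul_cancel_left _ _ d1]
end
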